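/- Suppose the ∂∂̄-lemma holds in every degree, i.e. for every k one has ker ∂̄ ∩ ∂(U^{k-1}) = ker ∂ ∩ ∂̄(U^{k+1}) = (∂∂̄)(U^k) as subspaces of U^k. Then for every k the map H^k_BC → H^k_∂̄ induced by the identity on representatives is a linear isomorphism; in particular dim H^k_BC = dim H^k_∂̄ whenever these are finite-dimensional. -/

import Mathlib

open Submodule LinearMap Module

section Setup

variable (U : ℤ → Type*) [∀ k, AddCommGroup (U k)] [∀ k, Module ℂ (U k)]

/-- The identification `U a → U b` induced by an equality `a = b` of degrees. -/
def castU {a b : ℤ} (h : a = b) : U a →ₗ[ℂ] U b := by subst h; exact LinearMap.id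

variable (D : ∀ k : ℤ, U k →ₗ[ℂ] U (k + 1)) (Db : ∀ k : ℤ, U k →ₗ[ℂ] U (k - 1))

/-- The composite `∂∂̄ : U^k → U^{k-1} → U^k`. -/
def ddbar (k : ℤ) : U k →ₗ[ℂ] U k :=
  (castU U (show k - 1 + 1 = k by ring)).comp ((D (k - 1)).comp (Db k))

/-- `ker ∂ ∩ U^k` -/
def kerD (k : ℤ) : Submodule ℂ (U k) := LinearMap.ker (D k)

/-- `ker ∂̄ ∩ U^k` -/
def kerDb (k : ℤ) : Submodule ℂ (U k) := LinearMap.ker (Db k)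

/-- `∂(U^{k-1})` -/
def imD (k : ℤ) : Submodule ℂ (U k) :=
  LinearMap.range ((castU U (show k - 1 + 1 = k by ring)).comp (D (k - 1)))

/-- `∂̄(U^{k+1})` -/
def imDb (k : ℤ) : Submodule ℂ (U k) :=
  LinearMap.range ((castU U (show k + 1 - 1 = k by ring)).comp (Db (k + 1)))

/-- `ker (∂∂̄) ∩ U^k` -/
def kerDDbar (k : ℤ) : Submodule ℂ (U k) := LinearMap.ker (ddbar U D Db k)

/-- `(∂∂̄)(U^k)` -/
def imDDbar (k : ℤ) : Submodule ℂ (U k) := LinearMap.range (ddbar U D Db k)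

end Setup

/-- The quotient of a submodule `p` by (the preimage in `p` of) a submodule `q`. -/
abbrev SubQuot {V : Type*} [AddCommGroup V] [Module ℂ V] (p q : Submodule ℂ V) :=
  ↥p ⧸ q.comap p.subtype

/-- The map `p/q → p'/q'` induced by the identity (inclusion) on representatives. -/
def qmap {V : Type*} [AddCommGroup V] [Module ℂ V] {p p' q q' : Submodule ℂ V}
    (hp : p ≤ p') (hq : q ≤ q') : SubQuot p q →ₗ[ℂ] SubQuot p' q' :=
  Submodule.mapQ _ _ (Submodule.inclusion hp) fun x hx => by
    simp only [Submodule.mem_comap, Submodule.subtype_apply, Submodule.coe_inclusion] at hx ⊢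
    exact hq hx

section Cohomology

variable (U : ℤ → Type*) [∀ k, AddCommGroup (U k)] [∀ k, Module ℂ (U k)]
variable (D : ∀ k : ℤ, U k →ₗ[ℂ] U (k + 1)) (Db : ∀ k : ℤ, U k →ₗ[ℂ] U (k - 1))

/-- `H^k_∂ = (ker ∂ ∩ U^k)/∂(U^{k-1})` -/
abbrev Hd (k : ℤ) := SubQuot (kerD U D k) (imD U D k)

/-- `H^k_∂̄ = (ker ∂̄ ∩ U^k)/∂̄(U^{k+1})` -/
abbrev Hdb (k : ℤ) := SubQuot (kerDb U Db k) (imDb U Db k)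

/-- `H^k_BC = (ker ∂ ∩ ker ∂̄ ∩ U^k)/(∂∂̄)(U^k)` -/
abbrev HBC (k : ℤ) := SubQuot (kerD U D k ⊓ kerDb U Db k) (imDDbar U D Db k)

/-- `H^k_A = (ker (∂∂̄) ∩ U^k)/(∂(U^{k-1}) + ∂̄(U^{k+1}))` -/
abbrev HA (k : ℤ) := SubQuot (kerDDbar U D Db k) (imD U D k ⊔ imDb U Db k)

/-- `A^k = (∂(U^{k-1}) ∩ ∂̄(U^{k+1}))/(∂∂̄)(U^k)` -/
abbrev Avar (k : ℤ) := SubQuot (imD U D k ⊓ imDb U Db k) (imDDbar U D Db k)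

/-- `B^k = (ker ∂̄ ∩ ∂(U^{k-1}))/(∂∂̄)(U^k)` -/
abbrev Bvar (k : ℤ) := SubQuot (kerDb U Db k ⊓ imD U D k) (imDDbar U D Db k)

/-- `C^k = (ker (∂∂̄) ∩ U^k)/((ker ∂̄ ∩ U^k) + ∂(U^{k-1}))` -/
abbrev Cvar (k : ℤ) := SubQuot (kerDDbar U D Db k) (kerDb U Db k ⊔ imD U D k)

/-- `D^k = (ker ∂ ∩ ∂̄(U^{k+1}))/(∂∂̄)(U^k)` -/
abbrev Dvar (k : ℤ) := SubQuot (kerD U D k ⊓ imDb U Db k) (imDDbar U D Db k)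

/-- `E^k = (ker (∂∂̄) ∩ U^k)/((ker ∂ ∩ U^k) + ∂̄(U^{k+1}))` -/
abbrev Evar (k : ℤ) := SubQuot (kerDDbar U D Db k) (kerD U D k ⊔ imDb U Db k)

/-- `F^k = (ker (∂∂̄) ∩ U^k)/((ker ∂ ∩ U^k) + (ker ∂̄ ∩ U^k))` -/
abbrev Fvar (k : ℤ) := SubQuot (kerDDbar U D Db k) (kerD U D k ⊔ kerDb U Db k)

end Cohomology
section InducedMapLemmas

variable (U : ℤ → Type*) [∀ k, AddCommGroup (U k)] [∀ k, Module ℂ (U k)]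
variable (D : ∀ k : ℤ, U k →ₗ[ℂ] U (k + 1)) (Db : ∀ k : ℤ, U k →ₗ[ℂ] U (k - 1))

lemma Db_castU {a b : ℤ} (h : a = b) (x : U a) :
    Db b (castU U h x) = castU U (show a - 1 = b - 1 by rw [h]) (Db a x) := by
  subst h; rfl

lemma imDb_le_kerDb (hDb2 : ∀ k : ℤ, (Db (k - 1)).comp (Db k) = 0) (k : ℤ) :
    imDb U Db k ≤ kerDb U Db k := by
  rintro x ⟨y, rfl⟩
  have h0 : Db (k + 1 - 1) (Db (k + 1) y) = 0 := by
    simpa using DFunLike.congr_fun (hDb2 (k + 1)) y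
  simp only [kerDb, LinearMap.mem_ker, LinearMap.comp_apply, Db_castU, h0, map_zero]

lemma imDDbar_le_imDb
    (hanti : ∀ k : ℤ, ddbar U D Db k
      + (castU U (show k + 1 - 1 = k by ring)).comp ((Db (k + 1)).comp (D k)) = 0)
    (k : ℤ) : imDDbar U D Db k ≤ imDb U Db k := by
  rintro x ⟨y, rfl⟩
  refine ⟨-(D k y), ?_⟩
  have h := DFunLike.congr_fun (hanti k) y
  simp only [LinearMap.add_apply, LinearMap.comp_apply, LinearMap.zero_apply] at h
  simp only [LinearMap.comp_apply, map_neg]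
  exact neg_eq_of_add_eq_zero_left h

lemma kerDb_le_kerDDbar (k : ℤ) : kerDb U Db k ≤ kerDDbar U D Db k := by
  intro x hx
  have hx' : Db k x = 0 := hx
  simp only [kerDDbar, LinearMap.mem_ker, ddbar, LinearMap.comp_apply, hx', map_zero]

end InducedMapLemmas
section Maps

variable (U : ℤ → Type*) [∀ k, AddCommGroup (U k)] [∀ k, Module ℂ (U k)]
variable (D : ∀ k : ℤ, U k →ₗ[ℂ] U (k + 1)) (Db : ∀ k : ℤ, U k →ₗ[ℂ] U (k - 1))
variable (hanti : ∀ k : ℤ, ddbar U D Db k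
  + (castU U (show k + 1 - 1 = k by ring)).comp ((Db (k + 1)).comp (D k)) = 0)

/-- The map `H^k_BC → H^k_∂̄` induced by the identity on representatives. -/
def mapBCH (k : ℤ) : HBC U D Db k →ₗ[ℂ] Hdb U Db k :=
  qmap inf_le_right (imDDbar_le_imDb U D Db hanti k)

end Maps

/-!
Since `∂̄(U^{k+1}) ⊆ ker ∂̄`, the map `H^k_BC → H^k_∂̄` is injective exactly when
`ker ∂ ∩ ∂̄(U^{k+1}) ⊆ (∂∂̄)(U^k)`. It is surjective when every `∂̄`-closed `x` can be made
`∂`-closed by subtracting some `∂̄y`, that is when `∂x = ∂∂̄y` can be solved. But `∂x` is `∂`-exact,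
and `∂̄`-closed by anticommutation, so the `∂∂̄`-lemma in degree `k + 1` provides such a `y`.
-/

section Qmap

variable {V : Type*} [AddCommGroup V] [Module ℂ V] {p p' q q' : Submodule ℂ V}

lemma qmap_injective_iff (hp : p ≤ p') (hq : q ≤ q') :
    Function.Injective (qmap hp hq) ↔ p ⊓ q' ≤ q := by
  rw [← LinearMap.ker_eq_bot, qmap, Submodule.ker_mapQ, ← le_bot_iff,
    Submodule.map_le_iff_le_comap, Submodule.comap_bot, Submodule.ker_mkQ]
  exact ⟨fun h x hx => h (x := ⟨x, hx.1⟩) hx.2, fun h x hx => h ⟨x.2, hx⟩⟩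

lemma qmap_surjective_iff (hp : p ≤ p') (hq : q ≤ q') :
    Function.Surjective (qmap hp hq) ↔ p' ≤ p ⊔ q' := by
  have modular_law : p ⊔ q' ⊓ p' = (p ⊔ q') ⊓ p' := (sup_inf_assoc_of_le q' hp).symm
  rw [← LinearMap.range_eq_top, qmap, Submodule.range_mapQ, Submodule.range_inclusion,
    Submodule.map_mkQ_eq_top,
    ← (Submodule.map_injective_of_injective p'.injective_subtype).eq_iff, Submodule.map_sup,
    Submodule.map_comap_subtype, Submodule.map_comap_subtype, Submodule.map_subtype_top,
    inf_eq_right.mpr hp, sup_comm, inf_comm, modular_law, inf_eq_right]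

end Qmap

section Degree

variable (U : ℤ → Type*) [∀ k, AddCommGroup (U k)] [∀ k, Module ℂ (U k)]
variable (D : ∀ k : ℤ, U k →ₗ[ℂ] U (k + 1)) (Db : ∀ k : ℤ, U k →ₗ[ℂ] U (k - 1))

lemma castU_bijective {a b : ℤ} (h : a = b) : Function.Bijective (castU U h) := by
  subst h
  exact Function.bijective_id

lemma castU_comp_D {a b : ℤ} (h : a = b) :
    (castU U (congrArg (· + 1) h)).comp (D a) = (D b).comp (castU U h) := by
  subst h
  rfl

lemma imD_add_one (k : ℤ) : imD U D (k + 1) = LinearMap.range (D k) := by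
  have hk : k + 1 - 1 = k := by ring
  rw [imD, castU_comp_D U D hk]
  exact LinearMap.range_comp_of_range_eq_top _
    (LinearMap.range_eq_top.mpr (castU_bijective U hk).surjective)

lemma imDDbar_add_one (k : ℤ) :
    imDDbar U D Db (k + 1) = (imDb U Db k).map (D k) := by
  have hk : k + 1 - 1 = k := by ring
  rw [imDDbar, ddbar, imDb, ← LinearMap.range_comp, ← LinearMap.comp_assoc,
    ← LinearMap.comp_assoc, castU_comp_D U D hk]

end Degree

section BottChern

variable {U : ℤ → Type*} [∀ k, AddCommGroup (U k)] [∀ k, Module ℂ (U k)]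
variable {D : ∀ k : ℤ, U k →ₗ[ℂ] U (k + 1)} {Db : ∀ k : ℤ, U k →ₗ[ℂ] U (k - 1)}

lemma D_mem_kerDb
    (hanti : ∀ k : ℤ, ddbar U D Db k
      + (castU U (show k + 1 - 1 = k by ring)).comp ((Db (k + 1)).comp (D k)) = 0)
    {k : ℤ} {x : U k} (hx : x ∈ kerDb U Db k) : D k x ∈ kerDb U Db (k + 1) := by
  have hddbar : ddbar U D Db k x = 0 := kerDb_le_kerDDbar U D Db k hx
  have hsum := LinearMap.congr_fun (hanti k) x
  rw [LinearMap.add_apply, hddbar, zero_add] at hsum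
  exact (map_eq_zero_iff _ (castU_bijective U (by ring)).injective).mp hsum

lemma map_D_kerDb_le
    (hanti : ∀ k : ℤ, ddbar U D Db k
      + (castU U (show k + 1 - 1 = k by ring)).comp ((Db (k + 1)).comp (D k)) = 0)
    (k : ℤ) : (kerDb U Db k).map (D k) ≤ kerDb U Db (k + 1) ⊓ imD U D (k + 1) := by
  rw [imD_add_one]
  exact le_inf (Submodule.map_le_iff_le_comap.mpr fun _ hx => D_mem_kerDb hanti hx)
    LinearMap.map_le_range

lemma mapBCH_injective_iff (hDb2 : ∀ k : ℤ, (Db (k - 1)).comp (Db k) = 0)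
    (hanti : ∀ k : ℤ, ddbar U D Db k
      + (castU U (show k + 1 - 1 = k by ring)).comp ((Db (k + 1)).comp (D k)) = 0) (k : ℤ) :
    Function.Injective (mapBCH U D Db hanti k) ↔
      kerD U D k ⊓ imDb U Db k ≤ imDDbar U D Db k := by
  rw [mapBCH, qmap_injective_iff, inf_assoc, inf_eq_right.mpr (imDb_le_kerDb U Db hDb2 k)]

lemma mapBCH_surjective_iff (hDb2 : ∀ k : ℤ, (Db (k - 1)).comp (Db k) = 0)
    (hanti : ∀ k : ℤ, ddbar U D Db k
      + (castU U (show k + 1 - 1 = k by ring)).comp ((Db (k + 1)).comp (D k)) = 0) (k : ℤ) :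
    Function.Surjective (mapBCH U D Db hanti k) ↔
      (kerDb U Db k).map (D k) ≤ imDDbar U D Db (k + 1) := by
  have modular_law : imDb U Db k ⊔ kerD U D k ⊓ kerDb U Db k =
      (imDb U Db k ⊔ kerD U D k) ⊓ kerDb U Db k :=
    (sup_inf_assoc_of_le _ (imDb_le_kerDb U Db hDb2 k)).symm
  calc Function.Surjective (mapBCH U D Db hanti k)
    _ ↔ kerDb U Db k ≤ (kerD U D k ⊓ kerDb U Db k) ⊔ imDb U Db k := qmap_surjective_iff _ _
    _ ↔ kerDb U Db k ≤ imDb U Db k ⊔ kerD U D k := by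
      rw [sup_comm, modular_law, le_inf_iff, and_iff_left le_rfl]
    _ ↔ (kerDb U Db k).map (D k) ≤ imDDbar U D Db (k + 1) := by
      rw [imDDbar_add_one, LinearMap.map_le_map_iff, kerD]

theorem ddbar_lemma_implies_BC_iso_dbar_general
    (hDb2 : ∀ k : ℤ, (Db (k - 1)).comp (Db k) = 0)
    (hanti : ∀ k : ℤ, ddbar U D Db k
      + (castU U (show k + 1 - 1 = k by ring)).comp ((Db (k + 1)).comp (D k)) = 0)
    {k : ℤ} (h_inj : kerD U D k ⊓ imDb U Db k ≤ imDDbar U D Db k)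
    (h_surj : kerDb U Db (k + 1) ⊓ imD U D (k + 1) ≤ imDDbar U D Db (k + 1)) :
    Function.Bijective (mapBCH U D Db hanti k) :=
  ⟨(mapBCH_injective_iff hDb2 hanti k).mpr h_inj,
    (mapBCH_surjective_iff hDb2 hanti k).mpr ((map_D_kerDb_le hanti k).trans h_surj)⟩

end BottChern

/-- if the `∂∂̄`-lemma holds in every degree, then the natural map
`H^k_BC → H^k_∂̄` is an isomorphism for every `k`; in particular the dimensions agree
whenever the cohomologies are finite-dimensional. -/
theorem ddbar_lemma_implies_BC_iso_dbar
    (n : ℕ) (U : ℤ → Type*) [∀ k, AddCommGroup (U k)] [∀ k, Module ℂ (U k)]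
    (hvan : ∀ k : ℤ, (n : ℤ) < |k| → ∀ x : U k, x = 0)
    (D : ∀ k : ℤ, U k →ₗ[ℂ] U (k + 1)) (Db : ∀ k : ℤ, U k →ₗ[ℂ] U (k - 1))
    (hD2 : ∀ k : ℤ, (D (k + 1)).comp (D k) = 0)
    (hDb2 : ∀ k : ℤ, (Db (k - 1)).comp (Db k) = 0)
    (hanti : ∀ k : ℤ, ddbar U D Db k
      + (castU U (show k + 1 - 1 = k by ring)).comp ((Db (k + 1)).comp (D k)) = 0)
    (hlemma : ∀ k : ℤ, kerDb U Db k ⊓ imD U D k = imDDbar U D Db k ∧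
      kerD U D k ⊓ imDb U Db k = imDDbar U D Db k) :
    (∀ k : ℤ, Function.Bijective ⇑(mapBCH U D Db hanti k)) ∧
    (∀ k : ℤ, FiniteDimensional ℂ (HBC U D Db k) → FiniteDimensional ℂ (Hdb U Db k) →
      finrank ℂ (HBC U D Db k) = finrank ℂ (Hdb U Db k)) := by
  have h_bij (k : ℤ) : Function.Bijective (mapBCH U D Db hanti k) :=
    ddbar_lemma_implies_BC_iso_dbar_general hDb2 hanti (hlemma k).2.le (hlemma (k + 1)).1.le
  exact ⟨h_bij, fun k _ _ => (LinearEquiv.ofBijective _ (h_bij k)).finrank_eq⟩
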